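/- Far Away Rule safety (Reduction Rule 4): Let G be a time-expanded network, let ub be a real number with val(G) ≤ ub, and let e = ((α,t),(β,t')) be an arc of G with dist((α_s,t_0),(α,t)) + w(e) + dist((β,t'),(α_s,t_max)) > ub. Then no feasible trajectory P with val(P) = val(G) uses e; consequently val(G − e) = val(G), where G − e is G with the arc e deleted. -/

import Mathlib

/-!
A path through the arc `(u, v)` splits into a path ending in `u`, the arc, and a path starting in
`v` (`TEN.exists_split`), so its value is at least `dist(s, u) + w(u, v) + dist(v, z)`
(`TEN.dist_add_le_val`). If that lower bound exceeds `ub ≥ vG`, no path of value `vG` uses the arc.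
Hence an optimal trajectory of `G` survives the deletion of the arc
(`TEN.isChain_iff_forall_zip_tail`), while every trajectory of `G'` is a trajectory of `G` of the
same value, so the minimum is unchanged.
-/


/-- A time-expanded network over bodies `A` and time grid `T`:
a directed graph on `A × T` whose arcs strictly increase the time coordinate,
with nonnegative arc weights. -/
structure TEN (A T : Type) [LinearOrder T] where
  E : (A × T) → (A × T) → Prop
  w : (A × T) → (A × T) → ℝ
  time_lt : ∀ u v, E u v → u.2 < v.2
  w_nonneg : ∀ u v, E u v → 0 ≤ w u v

namespace TEN

variable {A T : Type} [LinearOrder T]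

/-- A directed path (given as its list of vertices) from `u` to `v` in `G`. -/
def IsPathFrom (G : TEN A T) (u v : A × T) (p : List (A × T)) : Prop :=
  p.Chain' (fun a b => G.E a b) ∧ p.head? = some u ∧ p.getLast? = some v

/-- The value of a trajectory: the sum of the weights of its arcs. -/
def val (G : TEN A T) (p : List (A × T)) : ℝ :=
  ((p.zip p.tail).map fun e => G.w e.1 e.2).sum

/-- A feasible trajectory: a directed path from `(αs, t0)` to `(αs, tmax)` that
visits every body at least once. -/
def Feasible (G : TEN A T) (as : A) (t0 tmax : T) (p : List (A × T)) : Prop :=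
  G.IsPathFrom (as, t0) (as, tmax) p ∧ ∀ a : A, ∃ t : T, (a, t) ∈ p

/-- The trajectory `p` uses the arc `(u, v)`. -/
def Uses (p : List (A × T)) (u v : A × T) : Prop :=
  (u, v) ∈ p.zip p.tail

/-- Minimum total weight of a directed path from `u` to `v` (`⊤` if none exists). -/
noncomputable def dist (G : TEN A T) (u v : A × T) : EReal :=
  sInf {x : EReal | ∃ p, G.IsPathFrom u v p ∧ x = (G.val p : EReal)}

end TEN

namespace TEN

variable {A T : Type} [LinearOrder T]

theorem val_cons_cons (G : TEN A T) (x y : A × T) (l : List (A × T)) :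
    G.val (x :: y :: l) = G.w x y + G.val (y :: l) := by
  simp [val]

theorem isChain_iff_forall_zip_tail {α : Type} {R : α → α → Prop} (p : List α) :
    p.IsChain R ↔ ∀ x ∈ p.zip p.tail, R x.1 x.2 := by
  induction p with
  | nil => simp
  | cons x l ih =>
    cases l with
    | nil => simp
    | cons y l => simpa [List.isChain_cons_cons] using fun _ => ih

theorem exists_split (G : TEN A T) {u v z : A × T} (p : List (A × T)) :
    ∀ s, G.IsPathFrom s z p → Uses p u v →
      ∃ p₁ p₂, G.IsPathFrom s u p₁ ∧ G.IsPathFrom v z p₂ ∧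
        G.val p = G.val p₁ + G.w u v + G.val p₂ := by
  induction p with
  | nil => intro s _ h; simp [Uses] at h
  | cons x l ih =>
    cases l with
    | nil => intro s _ h; simp [Uses] at h
    | cons y l =>
      rintro s ⟨hc, hs, hz⟩ h
      obtain ⟨hxy, hc⟩ := List.isChain_cons_cons.1 hc
      obtain rfl : x = s := by simpa using hs
      have hl : G.IsPathFrom y z (y :: l) := ⟨hc, by simp, by simpa using hz⟩
      have h' : (u, v) = (x, y) ∨ Uses (y :: l) u v := by simpa [Uses] using h
      rcases h' with h | h
      · obtain ⟨rfl, rfl⟩ := Prod.mk.inj h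
        refine ⟨[u], v :: l, ⟨List.isChain_singleton _, by simp, by simp⟩, hl, ?_⟩
        rw [val_cons_cons]; simp [val]
      · obtain ⟨p₁, p₂, ⟨hc₁, hs₁, hu₁⟩, h₂, hv⟩ := ih y hl h
        cases p₁ with
        | nil => simp at hs₁
        | cons y' q =>
          obtain rfl : y' = y := by simpa using hs₁
          refine ⟨x :: y' :: q, p₂, ⟨List.isChain_cons_cons.2 ⟨hxy, hc₁⟩, by simp,
            by simpa using hu₁⟩, h₂, ?_⟩
          rw [val_cons_cons, hv, val_cons_cons]; ring

theorem dist_le_val (G : TEN A T) {u v : A × T} {p : List (A × T)} (h : G.IsPathFrom u v p) :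
    G.dist u v ≤ (G.val p : EReal) :=
  sInf_le ⟨p, h, rfl⟩

theorem dist_add_le_val (G : TEN A T) {s z u v : A × T} {p : List (A × T)}
    (hp : G.IsPathFrom s z p) (hu : Uses p u v) :
    G.dist s u + (G.w u v : EReal) + G.dist v z ≤ (G.val p : EReal) := by
  obtain ⟨p₁, p₂, h₁, h₂, hv⟩ := G.exists_split p s hp hu
  rw [hv, EReal.coe_add, EReal.coe_add]
  exact add_le_add (add_le_add (G.dist_le_val h₁) le_rfl) (G.dist_le_val h₂)

end TEN

/-- **Far Away Rule safety.** If `e = ((α,t),(β,t'))` is an arc with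
`dist((αs,t0),(α,t)) + w(e) + dist((β,t'),(αs,tmax)) > ub ≥ val G`, then no
optimal feasible trajectory uses `e`, and deleting `e` preserves the optimal value. -/
theorem far_away_rule_safe {A T : Type} [Fintype A] [Fintype T] [LinearOrder T]
    (G G' : TEN A T) (as : A) (t0 tmax : T)
    (ht0 : ∀ t : T, t0 ≤ t) (htmax : ∀ t : T, t ≤ tmax)
    (ub vG : ℝ)
    (hvG : IsLeast {x : ℝ | ∃ p, G.Feasible as t0 tmax p ∧ G.val p = x} vG)
    (hub : vG ≤ ub)
    (a b : A) (t t' : T) (he : G.E (a, t) (b, t'))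
    (hfar : (ub : EReal) <
      G.dist (as, t0) (a, t) + (G.w (a, t) (b, t') : EReal) + G.dist (b, t') (as, tmax))
    (hE : ∀ u v : A × T, G'.E u v ↔ G.E u v ∧ (u, v) ≠ ((a, t), (b, t')))
    (hw : G'.w = G.w) :
    (∀ p, G.Feasible as t0 tmax p → G.val p = vG → ¬ TEN.Uses p (a, t) (b, t')) ∧
    IsLeast {x : ℝ | ∃ p, G'.Feasible as t0 tmax p ∧ G'.val p = x} vG := by
  have key : ∀ p, G.Feasible as t0 tmax p → G.val p = vG →
      ¬ TEN.Uses p (a, t) (b, t') := by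
    intro p hp hv hu
    have h := hfar.trans_le (G.dist_add_le_val hp.1 hu)
    rw [hv, EReal.coe_lt_coe_iff] at h
    exact absurd hub (not_le.2 h)
  have hval : ∀ p, G'.val p = G.val p := fun p => by simp only [TEN.val, hw]
  refine ⟨key, ?_, ?_⟩
  · obtain ⟨p, hp, hv⟩ := hvG.1
    refine ⟨p, ⟨⟨?_, hp.1.2⟩, hp.2⟩, (hval p).trans hv⟩
    have hc := (TEN.isChain_iff_forall_zip_tail p).1 hp.1.1
    refine (TEN.isChain_iff_forall_zip_tail p).2 fun x hx => (hE _ _).2 ⟨hc x hx, fun h => ?_⟩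
    refine key p hp hv ?_
    unfold TEN.Uses
    rw [← h]
    exact hx
  · rintro x ⟨p, hp, rfl⟩
    refine hvG.2 ⟨p, ⟨⟨?_, hp.1.2⟩, hp.2⟩, (hval p).symm⟩
    exact List.IsChain.imp (fun u v h => ((hE u v).1 h).1) hp.1.1
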